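/- arXiv:2105.00018 — 2 statements merged into one kernel-verified Lean document; each statement's English description precedes it below -/
import Mathlib

section
/- There exists η > 0 such that, as k → ∞, ‖T G_k − G_k‖₁ = O(e^{−ηk}), where T is the one-step tail-function operator of the chain X and G_k is the Derrida–Hilhorst tail function; moreover η can be taken to be any value in (0, min(δ/2, θ/2, ρ)). -/
open MeasureTheory ProbabilityTheory Real Filter Set
open scoped ENNReal

noncomputable def hkfun (k x : ℝ) : ℝ :=
  Real.log ((Real.exp (-k) + Real.exp x) / (1 + Real.exp (x - k)))

noncomputable def hY (y : ℝ) : ℝ := y + Real.log (1 + Real.exp (-y))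

/-- A σ-finite measure ν is invariant for the chain Y_{n+1} = z_{n+1} + hY (Y_n),
where the increments have density ζ. -/
def IsInvariantY (ζ : ℝ → ℝ) (ν : Measure ℝ) : Prop :=
  ∀ g : ℝ → ℝ≥0∞, Measurable g →
    ∫⁻ z, g z ∂ν = ∫⁻ y, ∫⁻ z, g (z + hY y) * ENNReal.ofReal (ζ z) ∂volume ∂ν

noncomputable def Fs (ν : Measure ℝ) (x : ℝ) : ℝ := (ν (Set.Iic x)).toReal

noncomputable def CkDH (νl νr : Measure ℝ) (k : ℝ) : ℝ := Fs νr k + Fs νl k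

/-- The Derrida--Hilhorst tail function. -/
noncomputable def GkDH (νl νr : Measure ℝ) (k x : ℝ) : ℝ :=
  if 0 ≤ x then Fs νr (k - x) / CkDH νl νr k else 1 - Fs νl (x + k) / CkDH νl νr k

noncomputable def Lk (k : ℝ) (G : ℝ → ℝ) : ℝ := ∫ x, G x / (1 + Real.exp (k - x))

/-- The operator T acting on tail functions of probability measures (so G(-∞) = 1). -/
noncomputable def Tprob (ζ : ℝ → ℝ) (k : ℝ) (G : ℝ → ℝ) (x : ℝ) : ℝ :=
  (∫ t in Set.Ioi (k + x), ζ t) + ∫ y, G y * deriv (hkfun k) y * ζ (x - hkfun k y)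

/-!
For `y ≤ 0` the function `C_k (1 - G_k)` equals `F_◁ (y + k)`, which is stationary for the chain
with drift map `y ↦ hY (y + k) - k`. The operator `T` uses the drift map `h_k` instead. On `x ≤ 0`
the replacement costs three errors, all integrated against the kernel: the profile `C_k (1 - G_k)`
differs from `F_◁ (· + k)` only for `y > 0`, where `F_◁` and `F_▷` are affine up to `O(e^{-ρ ·})`;
the slopes `h_k'` and `hY' (· + k)` differ by `sigmoid (y - k)`; and the displacement
`|h_k y - (hY (y + k) - k)| ≤ e^{y - k}` is absorbed by the Hölder continuity of `ζ` for
`y ≤ k / 2` and by its tails beyond. Each error is `O(k e^{-η k})` in `L¹`, and `C_k ≥ 1 + k`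
removes the factor `k`. The half-line `x > 0` follows by the reflection `x ↦ -x`, which exchanges
`◁` and `▷`.
-/

open scoped Topology

section Softplus

lemma hY_eq_log_one_add_exp (y : ℝ) : hY y = log (1 + exp y) := by
  have h : 1 + exp y = exp y * (1 + exp (-y)) := by
    rw [mul_add, ← exp_add]; simp [add_comm]
  rw [h, log_mul (by positivity) (by positivity), log_exp, hY]

lemma hY_neg (y : ℝ) : hY (-y) = hY y - y := by
  rw [hY_eq_log_one_add_exp, hY]; ring

lemma hY_nonneg (y : ℝ) : 0 ≤ hY y := by
  rw [hY_eq_log_one_add_exp]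
  exact log_nonneg (by linarith [exp_pos y])

lemma le_hY (y : ℝ) : y ≤ hY y := by
  linarith [hY_neg y, hY_nonneg (-y)]

lemma hY_le_exp (y : ℝ) : hY y ≤ exp y := by
  rw [hY_eq_log_one_add_exp]
  linarith [log_le_sub_one_of_pos (show 0 < 1 + exp y by positivity)]

lemma hY_le_max_add_log_two (y : ℝ) : hY y ≤ max y 0 + log 2 := by
  rw [hY_eq_log_one_add_exp, log_le_iff_le_exp (by positivity), exp_add, exp_log two_pos]
  have h₁ : exp y ≤ exp (max y 0) := exp_le_exp.2 (le_max_left _ _)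
  have h₂ : 1 ≤ exp (max y 0) := one_le_exp (le_max_right _ _)
  linarith

lemma hasDerivAt_hY (y : ℝ) : HasDerivAt hY (sigmoid y) y := by
  have h := (hasDerivAt_id y).add (((hasDerivAt_id y).neg.exp.const_add 1).log (by positivity))
  refine h.congr_deriv ?_
  simp only [id_eq, Pi.neg_apply, sigmoid_def]
  field_simp
  ring

lemma continuous_hY : Continuous hY :=
  continuous_iff_continuousAt.2 fun y => (hasDerivAt_hY y).continuousAt

lemma tendsto_hY_atBot : Tendsto hY atBot (𝓝 0) :=
  squeeze_zero hY_nonneg hY_le_exp tendsto_exp_atBot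

lemma tendsto_hY_atTop : Tendsto hY atTop atTop :=
  tendsto_atTop_mono le_hY tendsto_id

lemma sigmoid_le_exp_mul {r : ℝ} (hr₀ : 0 ≤ r) (hr₁ : r ≤ 1) (t : ℝ) :
    sigmoid t ≤ exp (r * t) := by
  rcases le_total 0 t with ht | ht
  · exact (sigmoid_le_one t).trans (one_le_exp (by positivity))
  · have h : sigmoid t ≤ exp t := by
      rw [← neg_neg t, ← sigmoid_mul_rexp_neg, neg_neg]
      exact mul_le_of_le_one_left (exp_pos _).le (sigmoid_le_one _)
    exact h.trans (exp_le_exp.2 (by nlinarith))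

end Softplus

section OneStepMap

lemma hkfun_eq (k y : ℝ) : hkfun k y = hY (y + k) - k - hY (y - k) := by
  have h : exp (-k) + exp y = exp (-k) * (1 + exp (y + k)) := by
    rw [mul_add, ← exp_add]; simp
  rw [hkfun, log_div (by positivity) (by positivity), h, log_mul (by positivity) (by positivity),
    log_exp, hY_eq_log_one_add_exp, hY_eq_log_one_add_exp]
  ring

lemma hkfun_neg (k y : ℝ) : hkfun k (-y) = -hkfun k y := by
  have h₁ := hY_neg (y - k)
  have h₂ := hY_neg (y + k)
  rw [hkfun_eq, hkfun_eq, show -y + k = -(y - k) by ring, show -y - k = -(y + k) by ring]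
  linarith

lemma hasDerivAt_hkfun (k y : ℝ) :
    HasDerivAt (hkfun k) (sigmoid (y + k) - sigmoid (y - k)) y := by
  rw [funext (hkfun_eq k)]
  exact (((hasDerivAt_hY _).comp_add_const y k).sub_const k).sub
    ((hasDerivAt_hY _).comp_sub_const y k)

lemma deriv_hkfun (k y : ℝ) : deriv (hkfun k) y = sigmoid (y + k) - sigmoid (y - k) :=
  (hasDerivAt_hkfun k y).deriv

lemma deriv_hkfun_nonneg {k : ℝ} (hk : 0 ≤ k) (y : ℝ) : 0 ≤ deriv (hkfun k) y := by
  rw [deriv_hkfun]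
  linarith [sigmoid_le (show y - k ≤ y + k by linarith)]

lemma deriv_hkfun_le_sigmoid (k y : ℝ) : deriv (hkfun k) y ≤ sigmoid (k - y) := by
  rw [deriv_hkfun, ← neg_sub y k, sigmoid_neg]
  linarith [sigmoid_le_one (y + k)]

lemma deriv_hkfun_neg (k y : ℝ) : deriv (hkfun k) (-y) = deriv (hkfun k) y := by
  rw [deriv_hkfun, deriv_hkfun, show -y + k = -(y - k) by ring, show -y - k = -(y + k) by ring,
    sigmoid_neg, sigmoid_neg]
  ring

lemma continuous_hkfun (k : ℝ) : Continuous (hkfun k) :=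
  continuous_iff_continuousAt.2 fun y => (hasDerivAt_hkfun k y).continuousAt

lemma continuous_deriv_hkfun (k : ℝ) : Continuous (deriv (hkfun k)) := by
  have := continuous_sigmoid
  rw [funext (deriv_hkfun k)]
  fun_prop

lemma tendsto_hkfun_atBot (k : ℝ) : Tendsto (hkfun k) atBot (𝓝 (-k)) := by
  rw [funext (hkfun_eq k)]
  have h₁ := tendsto_hY_atBot.comp (tendsto_atBot_add_const_right atBot k tendsto_id)
  have h₂ := tendsto_hY_atBot.comp (tendsto_atBot_add_const_right atBot (-k) tendsto_id)
  simpa [Function.comp_def, sub_eq_add_neg] using (h₁.sub_const k).sub h₂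

lemma tendsto_hkfun_atTop (k : ℝ) : Tendsto (hkfun k) atTop (𝓝 k) := by
  have h := ((tendsto_hkfun_atBot k).comp tendsto_neg_atTop_atBot).neg
  simpa [Function.comp_def, hkfun_neg] using h

lemma min_sub_log_two_le_hkfun (k y : ℝ) : min y k - log 2 ≤ hkfun k y := by
  have h₁ := le_hY (y + k)
  have h₂ := hY_le_max_add_log_two (y - k)
  have h₃ : max (y - k) 0 = y - min y k := by rw [← max_sub_sub_left, sub_self, max_comm]
  rw [hkfun_eq]
  linarith

lemma abs_hkfun_sub_le (k y : ℝ) : |hkfun k y - (hY (y + k) - k)| ≤ exp (y - k) := by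
  rw [hkfun_eq, sub_sub_cancel_left, abs_neg, abs_of_nonneg (hY_nonneg _)]
  exact hY_le_exp _

end OneStepMap

section DensityCDF

/-- The distribution function `t ↦ ∫_{-∞}^t ζ` of the density `ζ`. -/
noncomputable def densityCDF (ζ : ℝ → ℝ) (t : ℝ) : ℝ := ∫ y in Iic t, ζ y

variable {ζ : ℝ → ℝ}

lemma hasDerivAt_densityCDF (hc : Continuous ζ) (hi : Integrable ζ) (t : ℝ) :
    HasDerivAt (densityCDF ζ) (ζ t) t := by
  have h : densityCDF ζ = fun t => (∫ y in (0 : ℝ)..t, ζ y) + densityCDF ζ 0 := by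
    ext t
    rw [densityCDF, densityCDF,
      ← intervalIntegral.integral_Iic_sub_Iic hi.integrableOn hi.integrableOn, sub_add_cancel]
  rw [h]
  exact (intervalIntegral.integral_hasDerivAt_right (hc.intervalIntegrable _ _)
    (hc.stronglyMeasurableAtFilter _ _) hc.continuousAt).add_const _

lemma continuous_densityCDF (hc : Continuous ζ) (hi : Integrable ζ) :
    Continuous (densityCDF ζ) :=
  continuous_iff_continuousAt.2 fun t => (hasDerivAt_densityCDF hc hi t).continuousAt

lemma densityCDF_nonneg (hn : ∀ x, 0 ≤ ζ x) (t : ℝ) : 0 ≤ densityCDF ζ t :=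
  integral_nonneg hn

lemma tendsto_densityCDF_atBot : Tendsto (densityCDF ζ) atBot (𝓝 0) :=
  tendsto_integral_Iic_zero tendsto_id

lemma setIntegral_Ioi_eq_sub_densityCDF (hi : Integrable ζ) (t : ℝ) :
    ∫ y in Ioi t, ζ y = (∫ x, ζ x) - densityCDF ζ t := by
  rw [densityCDF, ← intervalIntegral.integral_Iic_add_Ioi (b := t) hi.integrableOn hi.integrableOn,
    add_sub_cancel_left]

lemma setIntegral_Iic_comp_sub_right (f : ℝ → ℝ) (a b : ℝ) :
    ∫ x in Iic b, f (x - a) = ∫ x in Iic (b - a), f x := by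
  have h := (measurePreserving_sub_right volume a).setIntegral_preimage_emb
    (measurableEmbedding_subRight a) f (Iic (b - a))
  simpa using h

lemma setIntegral_Iic_zero_comp_sub_right (a : ℝ) :
    ∫ x in Iic 0, ζ (x - a) = densityCDF ζ (-a) := by
  rw [setIntegral_Iic_comp_sub_right, zero_sub, densityCDF]

lemma integrable_and_integral_eq_of_hasDerivAt_of_nonneg {f f' : ℝ → ℝ} {m n : ℝ}
    (hderiv : ∀ y, HasDerivAt f (f' y) y) (hf' : ∀ y, 0 ≤ f' y)
    (hbot : Tendsto f atBot (𝓝 m)) (htop : Tendsto f atTop (𝓝 n)) :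
    Integrable f' ∧ ∫ y, f' y = n - m := by
  have hright : IntegrableOn f' (Ioi 0) :=
    integrableOn_Ioi_deriv_of_nonneg' (fun y _ => hderiv y) (fun y _ => hf' y) htop
  have hleft : IntegrableOn f' (Iic 0) := by
    have hderiv' (y : ℝ) : HasDerivAt (fun y => -f (-y)) (f' (-y)) y :=
      ((hderiv (-y)).comp y (hasDerivAt_neg y)).neg.congr_deriv (by ring)
    have h := integrableOn_Ioi_deriv_of_nonneg' (a := 0) (fun y _ => hderiv' y)
      (fun y _ => hf' (-y)) (hbot.comp tendsto_neg_atTop_atBot).neg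
    have h' : IntegrableOn (fun y => f' (-y)) (Ici (-0)) := by
      rwa [neg_zero, integrableOn_Ici_iff_integrableOn_Ioi]
    simpa only [neg_neg] using h'.comp_neg_Iic
  have hint : Integrable f' := by
    rw [← integrableOn_univ, ← Iic_union_Ioi (a := 0)]
    exact hleft.union hright
  exact ⟨hint, integral_of_hasDerivAt_of_tendsto hderiv hint hbot htop⟩

lemma integral_deriv_hkfun_mul (hc : Continuous ζ) (hn : ∀ x, 0 ≤ ζ x) (hi : Integrable ζ)
    {k : ℝ} (hk : 0 ≤ k) (x : ℝ) :
    Integrable (fun y => deriv (hkfun k) y * ζ (x - hkfun k y)) ∧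
      ∫ y, deriv (hkfun k) y * ζ (x - hkfun k y)
        = densityCDF ζ (x + k) - densityCDF ζ (x - k) := by
  have hQ := continuous_densityCDF hc hi
  have hderiv (y : ℝ) : HasDerivAt (fun y => -densityCDF ζ (x - hkfun k y))
      (deriv (hkfun k) y * ζ (x - hkfun k y)) y := by
    have h := ((hasDerivAt_densityCDF hc hi (x - hkfun k y)).comp y
      ((hasDerivAt_hkfun k y).const_sub x)).neg
    exact h.congr_deriv (by rw [deriv_hkfun]; ring)
  have hbot := ((hQ.tendsto (x - -k)).comp ((tendsto_hkfun_atBot k).const_sub x)).neg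
  have htop := ((hQ.tendsto (x - k)).comp ((tendsto_hkfun_atTop k).const_sub x)).neg
  have h := integrable_and_integral_eq_of_hasDerivAt_of_nonneg hderiv
    (fun y => mul_nonneg (deriv_hkfun_nonneg hk y) (hn _)) hbot htop
  exact ⟨h.1, h.2.trans (by rw [sub_neg_eq_add x k]; ring)⟩

lemma integral_Ioi_sigmoid_mul (hc : Continuous ζ) (hn : ∀ x, 0 ≤ ζ x) (hi : Integrable ζ)
    (x y : ℝ) :
    IntegrableOn (fun u => sigmoid u * ζ (x - hY u)) (Ioi y) ∧
      ∫ u in Ioi y, sigmoid u * ζ (x - hY u) = densityCDF ζ (x - hY y) := by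
  have hderiv : ∀ u ∈ Ici y,
      HasDerivAt (fun u => -densityCDF ζ (x - hY u)) (sigmoid u * ζ (x - hY u)) u := by
    intro u _
    have h := ((hasDerivAt_densityCDF hc hi (x - hY u)).comp u ((hasDerivAt_hY u).const_sub x)).neg
    exact h.congr_deriv (by ring)
  have hpos : ∀ u ∈ Ioi y, 0 ≤ sigmoid u * ζ (x - hY u) :=
    fun u _ => mul_nonneg (sigmoid_nonneg u) (hn _)
  have hlim : Tendsto (fun u => -densityCDF ζ (x - hY u)) atTop (𝓝 (-0)) :=
    (tendsto_densityCDF_atBot.comp (tendsto_atBot_add_const_left _ x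
      (tendsto_neg_atTop_atBot.comp tendsto_hY_atTop))).neg
  refine ⟨integrableOn_Ioi_deriv_of_nonneg' hderiv hpos hlim, ?_⟩
  rw [integral_Ioi_of_hasDerivAt_of_nonneg' hderiv hpos hlim]
  simp

end DensityCDF

section TailOperator

variable {ζ G : ℝ → ℝ} {k : ℝ}

lemma one_sub_Tprob (hc : Continuous ζ) (hn : ∀ x, 0 ≤ ζ x) (hi : Integrable ζ)
    (hone : ∫ x, ζ x = 1) (hk : 0 ≤ k) (hG : Measurable G) (hG₁ : ∀ x, |G x| ≤ 1) (x : ℝ) :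
    Integrable (fun y => (1 - G y) * deriv (hkfun k) y * ζ (x - hkfun k y)) ∧
      1 - Tprob ζ k G x
        = densityCDF ζ (x - k) + ∫ y, (1 - G y) * deriv (hkfun k) y * ζ (x - hkfun k y) := by
  obtain ⟨hint, heq⟩ := integral_deriv_hkfun_mul hc hn hi hk x
  have hGint : Integrable fun y => G y * (deriv (hkfun k) y * ζ (x - hkfun k y)) :=
    hint.bdd_mul (c := 1) hG.aestronglyMeasurable (ae_of_all _ hG₁)
  have hsub : (fun y => (1 - G y) * deriv (hkfun k) y * ζ (x - hkfun k y))
      = fun y => deriv (hkfun k) y * ζ (x - hkfun k y)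
          - G y * (deriv (hkfun k) y * ζ (x - hkfun k y)) := by
    ext y; ring
  refine ⟨hsub ▸ hint.sub hGint, ?_⟩
  rw [hsub, integral_sub hint hGint, heq, Tprob, setIntegral_Ioi_eq_sub_densityCDF hi, hone,
    add_comm k x]
  simp_rw [mul_assoc]
  ring

lemma Tprob_reflect (hc : Continuous ζ) (hn : ∀ x, 0 ≤ ζ x) (hi : Integrable ζ)
    (hone : ∫ x, ζ x = 1) (hk : 0 ≤ k) (hG : Measurable G) (hG₁ : ∀ x, |G x| ≤ 1) (x : ℝ) :
    Tprob (fun x => ζ (-x)) k (fun y => 1 - G (-y)) x = 1 - Tprob ζ k G (-x) := by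
  have hCDF : ∫ t in Ioi (k + x), ζ (-t) = densityCDF ζ (-x - k) := by
    rw [integral_comp_neg_Ioi, densityCDF, neg_add_rev, sub_eq_add_neg]
  have hint : ∫ y, (1 - G (-y)) * deriv (hkfun k) y * ζ (-(x - hkfun k y))
      = ∫ y, (1 - G y) * deriv (hkfun k) y * ζ (-x - hkfun k y) := by
    rw [← integral_neg_eq_self]
    simp only [neg_neg, deriv_hkfun_neg, hkfun_neg, neg_add, sub_eq_add_neg]
  rw [(one_sub_Tprob hc hn hi hone hk hG hG₁ (-x)).2, Tprob, hCDF, hint]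

end TailOperator

section StationaryMeasure

variable {ζ : ℝ → ℝ} {ν : Measure ℝ}

lemma sigmaFinite_of_measure_Iic_lt_top (hν : ∀ x, ν (Iic x) < ⊤) : SigmaFinite ν := by
  refine ⟨⟨⟨fun n : ℕ => Iic (n : ℝ), fun _ => trivial, fun n => hν n, ?_⟩⟩⟩
  exact iUnion_eq_univ_iff.2 exists_nat_ge

lemma Fs_nonneg (ν : Measure ℝ) (x : ℝ) : 0 ≤ Fs ν x := ENNReal.toReal_nonneg

lemma Fs_mono (hν : ∀ x, ν (Iic x) < ⊤) : Monotone (Fs ν) := fun _ y hxy =>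
  ENNReal.toReal_mono (hν y).ne (measure_mono (Iic_subset_Iic.2 hxy))

lemma lintegral_lintegral_Ici [SFinite ν] {g : ℝ → ℝ≥0∞} (hg : Measurable g) :
    ∫⁻ y, (∫⁻ u in Ici y, g u) ∂ν = ∫⁻ u, ν (Iic u) * g u := by
  have hmeas : Measurable (Function.uncurry fun y => (Ici y).indicator g) :=
    (hg.comp measurable_snd).indicator (measurableSet_le measurable_fst measurable_snd)
  have hswap (u : ℝ) : (fun y => (Ici y).indicator g u) = (Iic u).indicator fun _ => g u := by
    ext y; simp [indicator]
  simp_rw [← lintegral_indicator measurableSet_Ici]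
  rw [lintegral_lintegral_swap hmeas.aemeasurable]
  refine lintegral_congr fun u => ?_
  rw [hswap, lintegral_indicator_const measurableSet_Iic, mul_comm]

lemma lintegral_indicator_Iic_mul_ofReal (hn : ∀ x, 0 ≤ ζ x) (hi : Integrable ζ) (x a : ℝ) :
    ∫⁻ z, (Iic x).indicator 1 (z + a) * ENNReal.ofReal (ζ z)
      = ENNReal.ofReal (densityCDF ζ (x - a)) := by
  rw [densityCDF, ofReal_integral_eq_lintegral_ofReal hi.integrableOn (ae_of_all _ hn),
    ← lintegral_indicator measurableSet_Iic]
  refine lintegral_congr fun z => ?_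
  simp [indicator, le_sub_iff_add_le]

lemma lintegral_Ici_ofReal_sigmoid_mul (hc : Continuous ζ) (hn : ∀ x, 0 ≤ ζ x)
    (hi : Integrable ζ) (x y : ℝ) :
    ∫⁻ u in Ici y, ENNReal.ofReal (sigmoid u * ζ (x - hY u))
      = ENNReal.ofReal (densityCDF ζ (x - hY y)) := by
  obtain ⟨hint, heq⟩ := integral_Ioi_sigmoid_mul hc hn hi x y
  rw [setLIntegral_congr Ioi_ae_eq_Ici.symm, ← heq, ofReal_integral_eq_lintegral_ofReal hint
    (ae_of_all _ fun u => mul_nonneg (sigmoid_nonneg u) (hn _))]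

lemma lintegral_Fs_mul_sigmoid_mul (hc : Continuous ζ) (hn : ∀ x, 0 ≤ ζ x) (hi : Integrable ζ)
    (hν : ∀ x, ν (Iic x) < ⊤) (hinv : IsInvariantY ζ ν) (x : ℝ) :
    ∫⁻ y, ENNReal.ofReal (Fs ν y * sigmoid y * ζ (x - hY y)) = ν (Iic x) := by
  have := sigmaFinite_of_measure_Iic_lt_top hν
  have := continuous_hY
  have := continuous_sigmoid
  have hmeas : Measurable fun u => ENNReal.ofReal (sigmoid u * ζ (x - hY u)) :=
    Measurable.ennreal_ofReal (by fun_prop)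
  symm
  calc ν (Iic x) = ∫⁻ z, (Iic x).indicator 1 z ∂ν :=
      (lintegral_indicator_one measurableSet_Iic).symm
    _ = ∫⁻ y, (∫⁻ u in Ici y, ENNReal.ofReal (sigmoid u * ζ (x - hY u))) ∂ν := by
      rw [hinv _ (measurable_one.indicator measurableSet_Iic)]
      simp_rw [lintegral_indicator_Iic_mul_ofReal hn hi, lintegral_Ici_ofReal_sigmoid_mul hc hn hi]
    _ = ∫⁻ u, ν (Iic u) * ENNReal.ofReal (sigmoid u * ζ (x - hY u)) :=
      lintegral_lintegral_Ici hmeas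
    _ = ∫⁻ y, ENNReal.ofReal (Fs ν y * sigmoid y * ζ (x - hY y)) := by
      refine lintegral_congr fun u => ?_
      rw [mul_assoc, ENNReal.ofReal_mul (Fs_nonneg ν u), Fs, ENNReal.ofReal_toReal (hν u).ne]

lemma integral_Fs_mul_sigmoid_mul (hc : Continuous ζ) (hn : ∀ x, 0 ≤ ζ x) (hi : Integrable ζ)
    (hν : ∀ x, ν (Iic x) < ⊤) (hinv : IsInvariantY ζ ν) (x : ℝ) :
    Integrable (fun y => Fs ν y * sigmoid y * ζ (x - hY y)) ∧
      ∫ y, Fs ν y * sigmoid y * ζ (x - hY y) = Fs ν x := by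
  have hlint := lintegral_Fs_mul_sigmoid_mul hc hn hi hν hinv x
  have hnn : 0 ≤ᵐ[volume] fun y => Fs ν y * sigmoid y * ζ (x - hY y) := ae_of_all _ fun y =>
    mul_nonneg (mul_nonneg (Fs_nonneg ν y) (sigmoid_nonneg y)) (hn _)
  have hmeas : Measurable fun y => Fs ν y * sigmoid y * ζ (x - hY y) :=
    ((Fs_mono hν).measurable.mul continuous_sigmoid.measurable).mul
      (hc.comp (continuous_const.sub continuous_hY)).measurable
  constructor
  · rw [← lintegral_ofReal_ne_top_iff_integrable hmeas.aestronglyMeasurable hnn, hlint]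
    exact (hν x).ne
  · rw [integral_eq_lintegral_of_nonneg_ae hnn hmeas.aestronglyMeasurable, hlint, Fs]

lemma integral_Fs_add_mul_sigmoid_mul (hc : Continuous ζ) (hn : ∀ x, 0 ≤ ζ x)
    (hi : Integrable ζ) (hν : ∀ x, ν (Iic x) < ⊤) (hinv : IsInvariantY ζ ν) (k x : ℝ) :
    Integrable (fun y => Fs ν (y + k) * sigmoid (y + k) * ζ (x - (hY (y + k) - k))) ∧
      ∫ y, Fs ν (y + k) * sigmoid (y + k) * ζ (x - (hY (y + k) - k)) = Fs ν (x + k) := by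
  obtain ⟨hint, heq⟩ := integral_Fs_mul_sigmoid_mul hc hn hi hν hinv (x + k)
  simp_rw [sub_sub_eq_add_sub x]
  exact ⟨hint.comp_add_right k, (integral_add_right_eq_self _ k).trans heq⟩

end StationaryMeasure

section TailFunction

variable {νl νr : Measure ℝ} {k : ℝ}

lemma CkDH_comm (νl νr : Measure ℝ) (k : ℝ) : CkDH νr νl k = CkDH νl νr k :=
  add_comm _ _

lemma CkDH_mul_one_sub_GkDH_of_nonneg (hC : 0 < CkDH νl νr k) {y : ℝ} (hy : 0 ≤ y) :
    CkDH νl νr k * (1 - GkDH νl νr k y) = CkDH νl νr k - Fs νr (k - y) := by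
  rw [GkDH, if_pos hy, mul_sub, mul_one, mul_div_cancel₀ _ hC.ne']

lemma CkDH_mul_one_sub_GkDH_of_nonpos (hC : 0 < CkDH νl νr k) {y : ℝ} (hy : y ≤ 0) :
    CkDH νl νr k * (1 - GkDH νl νr k y) = Fs νl (y + k) := by
  rcases hy.lt_or_eq with hy | rfl
  · rw [GkDH, if_neg hy.not_ge, sub_sub_cancel, mul_div_cancel₀ _ hC.ne']
  · rw [CkDH_mul_one_sub_GkDH_of_nonneg hC le_rfl, sub_zero, zero_add, CkDH, add_sub_cancel_left]

lemma GkDH_reflect (hC : 0 < CkDH νl νr k) (y : ℝ) :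
    GkDH νr νl k y = 1 - GkDH νl νr k (-y) := by
  have hC' : 0 < CkDH νr νl k := by rwa [CkDH_comm]
  refine mul_left_cancel₀ hC.ne' ?_
  rcases le_total 0 y with hy | hy
  · have h₁ := CkDH_mul_one_sub_GkDH_of_nonneg hC' hy
    have h₂ := CkDH_mul_one_sub_GkDH_of_nonpos hC (neg_nonpos.2 hy)
    rw [CkDH_comm, sub_eq_add_neg k, add_comm k] at h₁
    linarith
  · have h₁ := CkDH_mul_one_sub_GkDH_of_nonpos hC' hy
    have h₂ := CkDH_mul_one_sub_GkDH_of_nonneg hC (neg_nonneg.2 hy)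
    rw [CkDH_comm] at h₁
    rw [sub_neg_eq_add, add_comm k] at h₂
    linarith

lemma abs_GkDH_le_one (hl : ∀ x, νl (Iic x) < ⊤) (hr : ∀ x, νr (Iic x) < ⊤)
    (hC : 0 < CkDH νl νr k) (y : ℝ) : |GkDH νl νr k y| ≤ 1 := by
  have hl₀ := Fs_nonneg νl
  have hr₀ := Fs_nonneg νr
  rw [GkDH]
  split_ifs with hy
  · have h : Fs νr (k - y) ≤ CkDH νl νr k :=
      (Fs_mono hr (sub_le_self k hy)).trans (le_add_of_nonneg_right (hl₀ k))
    rw [abs_of_nonneg (div_nonneg (hr₀ _) hC.le)]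
    exact div_le_one_of_le₀ h hC.le
  · have h : Fs νl (y + k) ≤ CkDH νl νr k :=
      (Fs_mono hl (by linarith)).trans (le_add_of_nonneg_left (hr₀ k))
    have h₀ := div_nonneg (hl₀ (y + k)) hC.le
    have h₁ := div_le_one_of_le₀ h hC.le
    rw [abs_of_nonneg (by linarith)]
    linarith

lemma measurable_GkDH (hl : ∀ x, νl (Iic x) < ⊤) (hr : ∀ x, νr (Iic x) < ⊤) (k : ℝ) :
    Measurable (GkDH νl νr k) :=
  Measurable.ite measurableSet_Ici
    (((Fs_mono hr).measurable.comp (measurable_id.const_sub k)).div_const _)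
    ((((Fs_mono hl).measurable.comp (measurable_id.add_const k)).div_const _).const_sub 1)

end TailFunction

section KernelDiscrepancy

variable {ζ : ℝ → ℝ} {νl νr : Measure ℝ} {k : ℝ}

/-- The difference at `y` between the integrand of `C_k (1 - T G_k) (x)` and the integrand of the
stationary equation for `F_◁` at `x + k`, recentred by `y ↦ y + k`. -/
noncomputable def kernelDiscrepancy (ζ : ℝ → ℝ) (νl νr : Measure ℝ) (k x y : ℝ) : ℝ :=
  CkDH νl νr k * (1 - GkDH νl νr k y) * deriv (hkfun k) y * ζ (x - hkfun k y)
    - Fs νl (y + k) * sigmoid (y + k) * ζ (x - (hY (y + k) - k))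

lemma measurable_kernelDiscrepancy (hc : Continuous ζ) (hl : ∀ x, νl (Iic x) < ⊤)
    (hr : ∀ x, νr (Iic x) < ⊤) (k : ℝ) :
    Measurable (Function.uncurry (kernelDiscrepancy ζ νl νr k)) := by
  have := continuous_hY
  have := continuous_hkfun k
  have := (continuous_deriv_hkfun k).measurable
  have := continuous_sigmoid
  have := measurable_GkDH hl hr k
  have := (Fs_mono hl).measurable
  have : Measurable fun p : ℝ × ℝ => ζ (p.1 - hkfun k p.2) := Continuous.measurable (by fun_prop)
  have : Measurable fun p : ℝ × ℝ => ζ (p.1 - (hY (p.2 + k) - k)) :=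
    Continuous.measurable (by fun_prop)
  unfold Function.uncurry kernelDiscrepancy
  fun_prop

lemma abs_Tprob_GkDH_sub_le (hc : Continuous ζ) (hn : ∀ x, 0 ≤ ζ x) (hi : Integrable ζ)
    (hone : ∫ x, ζ x = 1) (hl : ∀ x, νl (Iic x) < ⊤) (hr : ∀ x, νr (Iic x) < ⊤)
    (hinv : IsInvariantY ζ νl) (hk : 0 ≤ k) (hC : 0 < CkDH νl νr k) {x : ℝ} (hx : x ≤ 0) :
    |Tprob ζ k (GkDH νl νr k) x - GkDH νl νr k x|
      ≤ densityCDF ζ (x - k)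
        + (CkDH νl νr k)⁻¹ * ∫ y, |kernelDiscrepancy ζ νl νr k x y| := by
  obtain ⟨hTint, hT⟩ := one_sub_Tprob hc hn hi hone hk (measurable_GkDH hl hr k)
    (abs_GkDH_le_one hl hr hC) x
  obtain ⟨hFint, hF⟩ := integral_Fs_add_mul_sigmoid_mul hc hn hi hl hinv k x
  set C := CkDH νl νr k
  have hdiff : ∫ y, kernelDiscrepancy ζ νl νr k x y
      = C * (1 - Tprob ζ k (GkDH νl νr k) x - densityCDF ζ (x - k))
        - C * (1 - GkDH νl νr k x) := by
    simp only [kernelDiscrepancy, mul_assoc] at hTint hFint hT hF ⊢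
    rw [integral_sub (hTint.const_mul _) hFint, hF, integral_const_mul, hT,
      CkDH_mul_one_sub_GkDH_of_nonpos hC hx, add_sub_cancel_left]
  have heq : Tprob ζ k (GkDH νl νr k) x - GkDH νl νr k x
      = -densityCDF ζ (x - k) - C⁻¹ * ∫ y, kernelDiscrepancy ζ νl νr k x y := by
    rw [hdiff]
    field_simp
    ring
  calc |Tprob ζ k (GkDH νl νr k) x - GkDH νl νr k x|
      ≤ |densityCDF ζ (x - k)| + |C⁻¹ * ∫ y, kernelDiscrepancy ζ νl νr k x y| := by
        rw [heq, ← abs_neg (densityCDF ζ (x - k))]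
        exact abs_sub _ _
    _ ≤ densityCDF ζ (x - k) + C⁻¹ * ∫ y, |kernelDiscrepancy ζ νl νr k x y| := by
        rw [abs_of_nonneg (densityCDF_nonneg hn _), abs_mul, abs_of_pos (inv_pos.2 hC)]
        gcongr
        exact abs_integral_le_integral_abs

end KernelDiscrepancy

section TranslatedDensities

variable {ζ : ℝ → ℝ}

lemma setIntegral_Iic_abs_sub_le (hn : ∀ x, 0 ≤ ζ x) (hi : Integrable ζ) (a b : ℝ) :
    ∫ x in Iic 0, |ζ (x - a) - ζ (x - b)| ≤ densityCDF ζ (-a) + densityCDF ζ (-b) := by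
  have ha := (hi.comp_sub_right a).integrableOn (s := Iic 0)
  have hb := (hi.comp_sub_right b).integrableOn (s := Iic 0)
  rw [← setIntegral_Iic_zero_comp_sub_right a, ← setIntegral_Iic_zero_comp_sub_right b,
    ← integral_add ha hb]
  refine integral_mono (ha.sub hb).abs (ha.add hb) fun x => (abs_sub _ _).trans ?_
  simp only [abs_of_nonneg (hn _), le_refl]

lemma setIntegral_Iic_abs_mul_sub_mul_le (hi : Integrable ζ) {f p : ℝ} (hf : 0 ≤ f) (hp : 0 ≤ p)
    (hn : ∀ x, 0 ≤ ζ x) (h q a b : ℝ) :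
    ∫ x in Iic 0, |h * p * ζ (x - a) - f * q * ζ (x - b)|
      ≤ |h - f| * p * densityCDF ζ (-a) + f * |p - q| * densityCDF ζ (-b)
        + f * p * ∫ x in Iic 0, |ζ (x - a) - ζ (x - b)| := by
  have ha := (hi.comp_sub_right a).integrableOn (s := Iic 0)
  have hb := (hi.comp_sub_right b).integrableOn (s := Iic 0)
  have hab : IntegrableOn (fun x => f * p * |ζ (x - a) - ζ (x - b)|) (Iic 0) :=
    (ha.sub hb).abs.const_mul _
  have hsum : IntegrableOn
      (fun x => |h - f| * p * ζ (x - a) + f * |p - q| * ζ (x - b)) (Iic 0) :=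
    (ha.const_mul _).add (hb.const_mul _)
  rw [← setIntegral_Iic_zero_comp_sub_right a, ← setIntegral_Iic_zero_comp_sub_right b,
    ← integral_const_mul, ← integral_const_mul, ← integral_const_mul,
    ← integral_add (ha.const_mul _) (hb.const_mul _), ← integral_add hsum hab]
  refine integral_mono ((ha.const_mul _).sub (hb.const_mul _)).abs (hsum.add hab) fun x => ?_
  calc |h * p * ζ (x - a) - f * q * ζ (x - b)|
      = |(h - f) * p * ζ (x - a) + f * (p - q) * ζ (x - b)
          + f * p * (ζ (x - a) - ζ (x - b))| := by ring_nf
    _ ≤ |(h - f) * p * ζ (x - a)| + |f * (p - q) * ζ (x - b)|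
          + |f * p * (ζ (x - a) - ζ (x - b))| := abs_add_three _ _ _
    _ = |h - f| * p * ζ (x - a) + f * |p - q| * ζ (x - b)
          + f * p * |ζ (x - a) - ζ (x - b)| := by
      simp only [abs_mul, abs_of_nonneg hf, abs_of_nonneg hp, abs_of_nonneg (hn _)]

lemma integral_abs_sub_comp_add_right_le (hn : ∀ x, 0 ≤ ζ x) (hi : Integrable ζ) {K θ d R : ℝ}
    (hK : ∀ x y, |ζ x - ζ y| ≤ K * |x - y| ^ θ) (hd : |d| ≤ 1) (hR : 0 ≤ R) :
    ∫ x, |ζ x - ζ (x + d)| ≤ 2 * (R + 1) * (K * |d| ^ θ) + 2 * ∫ y in {y | R < |y|}, ζ y := by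
  have hid := hi.comp_add_right d
  have hdiff : Integrable fun x => |ζ x - ζ (x + d)| := (hi.sub hid).abs
  have hmeas : MeasurableSet {x : ℝ | R + 1 < |x|} :=
    measurableSet_lt measurable_const measurable_norm
  have hcompl : {x : ℝ | R + 1 < |x|}ᶜ = Icc (-(R + 1)) (R + 1) := by
    ext x; simp only [mem_compl_iff, mem_ofPred_eq, not_lt, abs_le, mem_Icc]
  have hinner : ∫ x in Icc (-(R + 1)) (R + 1), |ζ x - ζ (x + d)|
      ≤ 2 * (R + 1) * (K * |d| ^ θ) := by
    calc ∫ x in Icc (-(R + 1)) (R + 1), |ζ x - ζ (x + d)|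
        ≤ ∫ _ in Icc (-(R + 1)) (R + 1), K * |d| ^ θ :=
          integral_mono hdiff.integrableOn (integrable_const _) fun x => by
            simpa using hK x (x + d)
      _ = 2 * (R + 1) * (K * |d| ^ θ) := by
          rw [setIntegral_const, volume_real_Icc_of_le (by linarith), smul_eq_mul]
          ring
  have htail : ∫ x in {x | R + 1 < |x|}, ζ x ≤ ∫ y in {y | R < |y|}, ζ y :=
    setIntegral_mono_set hi.integrableOn (ae_of_all _ hn)
      (ae_of_all _ fun x (hx : R + 1 < |x|) => show R < |x| by linarith)
  have htail' : ∫ x in {x | R + 1 < |x|}, ζ (x + d) ≤ ∫ y in {y | R < |y|}, ζ y := by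
    rw [← (measurePreserving_add_right volume d).setIntegral_preimage_emb
      (measurableEmbedding_addRight d) ζ]
    refine setIntegral_mono_set hid.integrableOn (ae_of_all _ fun x => hn _)
      (ae_of_all _ fun x (hx : R + 1 < |x|) => show R < |x + d| from ?_)
    have h := abs_sub_abs_le_abs_sub x (-d)
    rw [abs_neg, sub_neg_eq_add] at h
    linarith
  have houter : ∫ x in {x | R + 1 < |x|}, |ζ x - ζ (x + d)| ≤ 2 * ∫ y in {y | R < |y|}, ζ y := by
    calc ∫ x in {x | R + 1 < |x|}, |ζ x - ζ (x + d)|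
        ≤ ∫ x in {x | R + 1 < |x|}, (ζ x + ζ (x + d)) :=
          integral_mono hdiff.integrableOn (hi.add hid).integrableOn fun x =>
            (abs_sub _ _).trans (by simp only [abs_of_nonneg (hn _), le_refl])
      _ ≤ 2 * ∫ y in {y | R < |y|}, ζ y := by
          rw [integral_add hi.integrableOn hid.integrableOn]
          linarith
  rw [← integral_add_compl hmeas hdiff, hcompl]
  linarith

end TranslatedDensities

/-- A probability density which is uniformly `θ`-Hölder continuous and whose tails decay
exponentially with rate `δ`. -/
structure IsHolderExpDensity (ζ : ℝ → ℝ) (δ θ : ℝ) : Prop where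
  nonneg : ∀ x, 0 ≤ ζ x
  integral_eq_one : ∫ x, ζ x = 1
  exists_tail_le : ∃ K, ∀ r, 0 ≤ r → ∫ y in {y | r < |y|}, ζ y ≤ K * exp (-δ * r)
  exists_holder : ∃ K, ∀ x y, |ζ x - ζ y| ≤ K * |x - y| ^ θ

namespace IsHolderExpDensity

variable {ζ : ℝ → ℝ} {α β δ θ : ℝ}

lemma integrable (h : IsHolderExpDensity ζ δ θ) : Integrable ζ :=
  .of_integral_ne_zero (by simp [h.integral_eq_one])

lemma continuous (h : IsHolderExpDensity ζ δ θ) (hθ : 0 < θ) : Continuous ζ := by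
  obtain ⟨K, hK⟩ := h.exists_holder
  refine continuous_iff_continuousAt.2 fun y => tendsto_iff_dist_tendsto_zero.2 ?_
  have hlim : Tendsto (fun x => K * |x - y| ^ θ) (𝓝 y) (𝓝 (K * |y - y| ^ θ)) :=
    Continuous.tendsto (by fun_prop (disch := positivity)) y
  rw [sub_self, abs_zero, zero_rpow hθ.ne', mul_zero] at hlim
  exact squeeze_zero (fun _ => dist_nonneg) (fun x => hK x y) hlim

lemma comp_neg (h : IsHolderExpDensity ζ δ θ) : IsHolderExpDensity (fun x => ζ (-x)) δ θ where
  nonneg x := h.nonneg (-x)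
  integral_eq_one := (integral_neg_eq_self ζ volume).trans h.integral_eq_one
  exists_tail_le := by
    obtain ⟨K, hK⟩ := h.exists_tail_le
    refine ⟨K, fun r hr => le_of_eq_of_le ?_ (hK r hr)⟩
    have := (Measure.measurePreserving_neg volume).setIntegral_preimage_emb
      (Homeomorph.neg ℝ).measurableEmbedding ζ {y | r < |y|}
    simpa using this
  exists_holder := by
    obtain ⟨K, hK⟩ := h.exists_holder
    refine ⟨K, fun x y => (hK (-x) (-y)).trans_eq ?_⟩
    rw [neg_sub_neg, abs_sub_comm]

lemma densityCDF_le_one (h : IsHolderExpDensity ζ δ θ) (t : ℝ) : densityCDF ζ t ≤ 1 :=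
  h.integral_eq_one ▸ setIntegral_le_integral h.integrable (ae_of_all _ h.nonneg)

lemma exists_densityCDF_neg_le (h : IsHolderExpDensity ζ δ θ) :
    ∃ K > 0, ∀ t, densityCDF ζ (-t) ≤ K * exp (-δ * max t 0) := by
  obtain ⟨K, hK⟩ := h.exists_tail_le
  refine ⟨max K 1, by positivity, fun t => ?_⟩
  rcases le_total t 0 with ht | ht
  · simpa [max_eq_right ht] using Or.inr (h.densityCDF_le_one (-t))
  · rw [max_eq_left ht]
    calc densityCDF ζ (-t) = ∫ y in Iio (-t), ζ y := integral_Iic_eq_integral_Iio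
      _ ≤ ∫ y in {y | t < |y|}, ζ y :=
        setIntegral_mono_set h.integrable.integrableOn (ae_of_all _ h.nonneg)
          (ae_of_all _ fun y (hy : y < -t) => show t < |y| from lt_abs.2 (.inr (by linarith)))
      _ ≤ K * exp (-δ * t) := hK t ht
      _ ≤ max K 1 * exp (-δ * t) := by gcongr; exact le_max_left K 1

lemma exists_densityCDF_neg_hkfun_le (h : IsHolderExpDensity ζ δ θ) (hδ : 0 ≤ δ) :
    ∃ K > 0, ∀ k y, densityCDF ζ (-hkfun k y) ≤ K * exp (-δ * min y k) := by
  obtain ⟨K, hK₀, hK⟩ := h.exists_densityCDF_neg_le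
  refine ⟨K * exp (δ * log 2), by positivity, fun k y => (hK _).trans ?_⟩
  rw [mul_assoc, ← exp_add]
  have := min_sub_log_two_le_hkfun k y
  have := le_max_left (hkfun k y) 0
  gcongr
  nlinarith

lemma exists_densityCDF_neg_hY_le (h : IsHolderExpDensity ζ δ θ) (hδ : 0 ≤ δ) :
    ∃ K > 0, ∀ k y, densityCDF ζ (-(hY (y + k) - k)) ≤ K * exp (-δ * max y 0) := by
  obtain ⟨K, hK₀, hK⟩ := h.exists_densityCDF_neg_le
  refine ⟨K, hK₀, fun k y => (hK _).trans ?_⟩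
  have : y ≤ hY (y + k) - k := by linarith [le_hY (y + k)]
  simp only [neg_mul]
  gcongr

lemma exists_lintegral_densityCDF_sub_le (h : IsHolderExpDensity ζ δ θ) (hδ : 0 < δ) :
    ∃ K > 0, ∀ k ≥ 0, ∫⁻ x in Iic 0, ENNReal.ofReal (densityCDF ζ (x - k))
      ≤ ENNReal.ofReal (K * exp (-δ * k)) := by
  obtain ⟨K, hK₀, hK⟩ := h.exists_densityCDF_neg_le
  refine ⟨K / δ, by positivity, fun k hk => ?_⟩
  have hle : ∀ x ∈ Iic (0 : ℝ), densityCDF ζ (x - k) ≤ K * exp (-δ * k) * exp (δ * x) := by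
    intro x hx
    have h₁ := hK (k - x)
    rw [neg_sub, max_eq_left (by linarith [mem_Iic.1 hx])] at h₁
    rw [mul_assoc, ← exp_add]
    exact h₁.trans_eq (by ring_nf)
  calc ∫⁻ x in Iic 0, ENNReal.ofReal (densityCDF ζ (x - k))
      ≤ ∫⁻ x in Iic 0, ENNReal.ofReal (K * exp (-δ * k) * exp (δ * x)) :=
        setLIntegral_mono' measurableSet_Iic fun x hx => ENNReal.ofReal_le_ofReal (hle x hx)
    _ = ENNReal.ofReal (∫ x in Iic 0, K * exp (-δ * k) * exp (δ * x)) :=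
        (ofReal_integral_eq_lintegral_ofReal ((integrableOn_exp_mul_Iic hδ 0).const_mul _)
          (ae_of_all _ fun x => by positivity)).symm
    _ = ENNReal.ofReal (K / δ * exp (-δ * k)) := by
        rw [integral_const_mul, integral_exp_mul_Iic hδ]
        simp only [mul_zero, exp_zero]
        ring_nf

lemma exists_integral_abs_sub_le (h : IsHolderExpDensity ζ δ θ) (hδ : 0 < δ) (hβ₀ : 0 ≤ β)
    (hβ : β < θ) :
    ∃ C > 0, ∀ s ≥ 0, ∀ a b, |a - b| ≤ exp (-s) →
      ∫ x, |ζ (x - a) - ζ (x - b)| ≤ C * exp (-β * s) := by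
  obtain ⟨K, hK⟩ := h.exists_holder
  obtain ⟨L, hL⟩ := h.exists_tail_le
  have hK₀ : 0 ≤ K := by simpa using (abs_nonneg _).trans (hK 1 0)
  have hL₀ : 0 ≤ L := by
    simpa using (integral_nonneg h.nonneg).trans (hL 0 le_rfl)
  have hθβ : 0 < θ - β := sub_pos.2 hβ
  refine ⟨2 * (β / δ / (θ - β) + 1) * K + 2 * L + 1, by positivity, fun s hs a b hab => ?_⟩
  have htrans : ∫ x, |ζ (x - a) - ζ (x - b)| = ∫ x, |ζ x - ζ (x + (a - b))| := by
    rw [← integral_sub_right_eq_self (fun x => |ζ x - ζ (x + (a - b))|) a]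
    simp only [sub_add_sub_cancel]
  have hrpow : |a - b| ^ θ ≤ exp (-θ * s) :=
    (rpow_le_rpow (abs_nonneg _) hab (hβ₀.trans hβ.le)).trans_eq (by rw [← exp_mul]; ring_nf)
  have hlin : β / δ * s + 1 ≤ (β / δ / (θ - β) + 1) * exp ((θ - β) * s) := by
    have h₁ := add_one_le_exp ((θ - β) * s)
    have h₂ : 0 ≤ (θ - β) * s := by positivity
    have h₃ : β / δ * s = β / δ / (θ - β) * ((θ - β) * s) := by field_simp
    have h₄ : 0 ≤ β / δ / (θ - β) := by positivity
    rw [h₃]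
    nlinarith
  calc ∫ x, |ζ (x - a) - ζ (x - b)|
      ≤ 2 * (β / δ * s + 1) * (K * |a - b| ^ θ) + 2 * ∫ y in {y | β / δ * s < |y|}, ζ y := by
        rw [htrans]
        exact integral_abs_sub_comp_add_right_le h.nonneg h.integrable hK
          (hab.trans (exp_le_one_iff.2 (by linarith))) (by positivity)
    _ ≤ 2 * ((β / δ / (θ - β) + 1) * exp ((θ - β) * s)) * (K * exp (-θ * s))
          + 2 * (L * exp (-δ * (β / δ * s))) := by
        gcongr
        exact hL _ (by positivity)
    _ = (2 * (β / δ / (θ - β) + 1) * K + 2 * L) * exp (-β * s) := by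
        rw [show -β * s = (θ - β) * s + -θ * s by ring, exp_add,
          show -δ * (β / δ * s) = (θ - β) * s + -θ * s by field_simp; ring, exp_add]
        ring
    _ ≤ (2 * (β / δ / (θ - β) + 1) * K + 2 * L + 1) * exp (-β * s) :=
        mul_le_mul_of_nonneg_right (le_add_of_nonneg_right zero_le_one) (exp_pos _).le

lemma exists_setIntegral_abs_sub_le (h : IsHolderExpDensity ζ δ θ) (hδ : 0 < δ) (hα₀ : 0 ≤ α)
    (hαδ : α ≤ δ / 2) (hαθ : α < θ / 2) :
    ∃ C > 0, ∀ k ≥ 0, ∀ y, ∫ x in Iic 0, |ζ (x - hkfun k y) - ζ (x - (hY (y + k) - k))|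
      ≤ C * exp (-α * (k + max (-y) 0)) := by
  obtain ⟨K, hK₀, hK⟩ := h.exists_densityCDF_neg_hkfun_le hδ.le
  obtain ⟨L, hL₀, hL⟩ := h.exists_densityCDF_neg_hY_le hδ.le
  obtain ⟨M, hM₀, hM⟩ :=
    h.exists_integral_abs_sub_le hδ (β := 2 * α) (by positivity) (by linarith)
  refine ⟨K + L + M, by positivity, fun k hk y => ?_⟩
  rcases le_total (k / 2) y with hy | hy
  · have hexp {t : ℝ} (ht : k / 2 ≤ t) : exp (-δ * t) ≤ exp (-α * (k + max (-y) 0)) := by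
      rw [max_eq_right (by linarith)]
      exact exp_le_exp.2 (by nlinarith)
    calc ∫ x in Iic 0, |ζ (x - hkfun k y) - ζ (x - (hY (y + k) - k))|
        ≤ K * exp (-δ * min y k) + L * exp (-δ * max y 0) :=
          (setIntegral_Iic_abs_sub_le h.nonneg h.integrable _ _).trans
            (add_le_add (hK k y) (hL k y))
      _ ≤ K * exp (-α * (k + max (-y) 0)) + L * exp (-α * (k + max (-y) 0)) :=
          add_le_add
            (mul_le_mul_of_nonneg_left (hexp (le_min hy (by linarith))) hK₀.le)
            (mul_le_mul_of_nonneg_left (hexp (hy.trans (le_max_left y 0))) hL₀.le)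
      _ ≤ (K + L + M) * exp (-α * (k + max (-y) 0)) := by
          rw [← add_mul]
          exact mul_le_mul_of_nonneg_right (le_add_of_nonneg_right hM₀.le) (exp_pos _).le
  · have hexp : exp (-(2 * α) * (k - y)) ≤ exp (-α * (k + max (-y) 0)) := by
      have : k + max (-y) 0 ≤ 2 * (k - y) := by
        rcases max_cases (-y) 0 with ⟨h, -⟩ | ⟨h, -⟩ <;> linarith
      exact exp_le_exp.2 (by nlinarith)
    have hint := ((h.integrable.comp_sub_right (hkfun k y)).sub
      (h.integrable.comp_sub_right (hY (y + k) - k))).abs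
    calc ∫ x in Iic 0, |ζ (x - hkfun k y) - ζ (x - (hY (y + k) - k))|
        ≤ ∫ x, |ζ (x - hkfun k y) - ζ (x - (hY (y + k) - k))| :=
          setIntegral_le_integral hint (ae_of_all _ fun _ => abs_nonneg _)
      _ ≤ M * exp (-(2 * α) * (k - y)) :=
          hM (k - y) (by linarith) _ _ (by simpa using abs_hkfun_sub_le k y)
      _ ≤ (K + L + M) * exp (-α * (k + max (-y) 0)) := by gcongr; linarith

end IsHolderExpDensity

/-- The measure `ν` is finite on left half-lines and its distribution function is
`x + c + O(exp (-ρ x))` as `x → ∞`. -/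
structure HasLinearAsymptotics (ν : Measure ℝ) (c ρ : ℝ) : Prop where
  measure_Iic_lt_top : ∀ x, ν (Iic x) < ⊤
  exists_eventually_abs_le : ∃ K x₀, ∀ x ≥ x₀, |Fs ν x - (x + c)| ≤ K * exp (-ρ * x)

namespace HasLinearAsymptotics

variable {ν νl νr : Measure ℝ} {c cl cr ρ : ℝ}

lemma exists_abs_Fs_sub_le (h : HasLinearAsymptotics ν c ρ) (hρ : 0 ≤ ρ) :
    ∃ E > 0, ∀ x ≥ 0, |Fs ν x - (x + c)| ≤ E * exp (-ρ * x) := by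
  obtain ⟨K, x₀, hK⟩ := h.exists_eventually_abs_le
  set x₁ := max x₀ 0
  have hx₁ : 0 ≤ x₁ := le_max_right x₀ 0
  set B := Fs ν x₁ + x₁ + |c|
  have hB : 0 ≤ B := add_nonneg (add_nonneg (Fs_nonneg ν x₁) hx₁) (abs_nonneg c)
  refine ⟨|K| + B * exp (ρ * x₁) + 1, by positivity, fun x hx => ?_⟩
  rcases le_total x₁ x with hx₁x | hxx₁
  · calc |Fs ν x - (x + c)| ≤ K * exp (-ρ * x) := hK x ((le_max_left x₀ 0).trans hx₁x)
      _ ≤ (|K| + B * exp (ρ * x₁) + 1) * exp (-ρ * x) := by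
        gcongr
        have := le_abs_self K
        have : 0 ≤ B * exp (ρ * x₁) := by positivity
        linarith
  · have hF : Fs ν x ≤ Fs ν x₁ := Fs_mono h.measure_Iic_lt_top hxx₁
    calc |Fs ν x - (x + c)| ≤ B := by
          have := Fs_nonneg ν x
          have := abs_le.1 (le_refl |c|)
          exact abs_le.2 ⟨by linarith, by linarith⟩
      _ ≤ B * exp (ρ * x₁) * exp (-ρ * x) := by
        rw [mul_assoc, ← exp_add]
        exact le_mul_of_one_le_right hB (one_le_exp (by nlinarith))
      _ ≤ (|K| + B * exp (ρ * x₁) + 1) * exp (-ρ * x) := by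
        gcongr
        have := abs_nonneg K
        linarith

lemma exists_Fs_add_le (h : HasLinearAsymptotics ν c ρ) (hρ : 0 ≤ ρ) :
    ∃ E > 0, ∀ k ≥ 0, ∀ y, Fs ν (y + k) ≤ E * ((1 + k) * (1 + max y 0)) := by
  obtain ⟨E, hE₀, hE⟩ := h.exists_abs_Fs_sub_le hρ
  refine ⟨1 + |c| + E, by positivity, fun k hk y => ?_⟩
  have hy : 0 ≤ max y 0 := le_max_right y 0
  have hmono : Fs ν (y + k) ≤ Fs ν (max y 0 + k) :=
    Fs_mono h.measure_Iic_lt_top (by gcongr; exact le_max_left y 0)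
  have hasymp := (abs_le.1 (hE (max y 0 + k) (by positivity))).2
  have hexp : E * exp (-ρ * (max y 0 + k)) ≤ E :=
    mul_le_of_le_one_right hE₀.le (exp_le_one_iff.2 (by nlinarith))
  have hone : max y 0 + k + 1 ≤ (1 + k) * (1 + max y 0) := by nlinarith
  calc Fs ν (y + k) ≤ (max y 0 + k) + |c| + E := by linarith [le_abs_self c]
    _ ≤ (1 + |c| + E) * (max y 0 + k + 1) := by
      have := mul_nonneg (add_nonneg (abs_nonneg c) hE₀.le) (add_nonneg hy hk)
      linarith
    _ ≤ (1 + |c| + E) * ((1 + k) * (1 + max y 0)) := by gcongr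

lemma eventually_le_Fs (h : HasLinearAsymptotics ν c ρ) (hρ : 0 ≤ ρ) :
    ∀ᶠ x in atTop, (1 + x) / 2 ≤ Fs ν x := by
  obtain ⟨E, hE₀, hE⟩ := h.exists_abs_Fs_sub_le hρ
  filter_upwards [eventually_ge_atTop 0, eventually_ge_atTop (1 - 2 * c + 2 * E)] with x hx₀ hx
  have hasymp := (abs_le.1 (hE x hx₀)).1
  have hexp : E * exp (-ρ * x) ≤ E :=
    mul_le_of_le_one_right hE₀.le (exp_le_one_iff.2 (by nlinarith))
  linarith

lemma eventually_le_CkDH (hl : HasLinearAsymptotics νl cl ρ) (hr : HasLinearAsymptotics νr cr ρ)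
    (hρ : 0 ≤ ρ) : ∀ᶠ k in atTop, 1 + k ≤ CkDH νl νr k := by
  filter_upwards [hl.eventually_le_Fs hρ, hr.eventually_le_Fs hρ] with k hkl hkr
  rw [CkDH]
  linarith

lemma exists_abs_CkDH_sub_Fs_sub_Fs_le (hl : HasLinearAsymptotics νl cl ρ)
    (hr : HasLinearAsymptotics νr cr ρ) (hρ : 0 ≤ ρ) :
    ∃ E > 0, ∀ k y, 0 ≤ y → y ≤ k →
      |CkDH νl νr k - Fs νr (k - y) - Fs νl (y + k)| ≤ E * exp (-ρ * (k - y)) := by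
  obtain ⟨El, hEl₀, hEl⟩ := hl.exists_abs_Fs_sub_le hρ
  obtain ⟨Er, hEr₀, hEr⟩ := hr.exists_abs_Fs_sub_le hρ
  refine ⟨2 * (El + Er), by positivity, fun k y hy hyk => ?_⟩
  have hexp {E t : ℝ} (hE : 0 < E) (ht : k - y ≤ t) :
      E * exp (-ρ * t) ≤ E * exp (-ρ * (k - y)) :=
    mul_le_mul_of_nonneg_left (exp_le_exp.2 (by nlinarith)) hE.le
  have h₁ := abs_le.1 ((hEr k (hy.trans hyk)).trans (hexp hEr₀ (sub_le_self k hy)))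
  have h₂ := abs_le.1 ((hEl k (hy.trans hyk)).trans (hexp hEl₀ (sub_le_self k hy)))
  have h₃ := abs_le.1 (hEr (k - y) (sub_nonneg.2 hyk))
  have h₄ := abs_le.1 ((hEl (y + k) (by linarith)).trans (hexp hEl₀ (by linarith)))
  rw [CkDH, abs_le]
  constructor <;> linarith [h₁.1, h₁.2, h₂.1, h₂.2, h₃.1, h₃.2, h₄.1, h₄.2]

lemma exists_abs_CkDH_mul_one_sub_GkDH_sub_le (hl : HasLinearAsymptotics νl cl ρ)
    (hr : HasLinearAsymptotics νr cr ρ) (hρ : 0 ≤ ρ) :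
    ∃ E > 0, ∀ k ≥ 0, 0 < CkDH νl νr k → ∀ y ≥ 0,
      |CkDH νl νr k * (1 - GkDH νl νr k y) - Fs νl (y + k)|
        ≤ E * ((1 + k) * (1 + y)) * exp (-ρ * max (k - y) 0) := by
  obtain ⟨E, hE₀, hE⟩ := exists_abs_CkDH_sub_Fs_sub_Fs_le hl hr hρ
  obtain ⟨El, hEl₀, hEl⟩ := hl.exists_Fs_add_le hρ
  obtain ⟨Er, hEr₀, hEr⟩ := hr.exists_Fs_add_le hρ
  refine ⟨E + (2 * El + Er), by positivity, fun k hk hC y hy => ?_⟩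
  rw [CkDH_mul_one_sub_GkDH_of_nonneg hC hy]
  rcases le_total y k with hyk | hky
  · rw [max_eq_left (sub_nonneg.2 hyk)]
    refine (hE k y hy hyk).trans (mul_le_mul_of_nonneg_right ?_ (exp_pos _).le)
    have : 1 ≤ (1 + k) * (1 + y) := by nlinarith
    have : 0 ≤ (2 * El + Er) * ((1 + k) * (1 + y)) := by positivity
    nlinarith
  · have hFr : Fs νr (k - y) ≤ Fs νr k := Fs_mono hr.measure_Iic_lt_top (sub_le_self k hy)
    have hFr₀ := Fs_nonneg νr (k - y)
    have hFl : Fs νl k ≤ Fs νl (y + k) := Fs_mono hl.measure_Iic_lt_top (by linarith)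
    have hFl₀ := Fs_nonneg νl k
    have hFl' := hEl k hk y
    have hFr' : Fs νr k ≤ Fs νr (y + k) := Fs_mono hr.measure_Iic_lt_top (by linarith)
    have hFr'' := hEr k hk y
    rw [max_eq_left hy] at hFl' hFr''
    rw [max_eq_right (sub_nonpos.2 hky), mul_zero, exp_zero, mul_one, CkDH, abs_le]
    have : 0 ≤ E * ((1 + k) * (1 + y)) := by positivity
    have : 0 ≤ El * ((1 + k) * (1 + y)) := by positivity
    have : 0 ≤ Er * ((1 + k) * (1 + y)) := by positivity
    constructor <;> linarith

end HasLinearAsymptotics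

section ErrorBound

variable {ζ : ℝ → ℝ} {α δ ε η θ ρ cl cr : ℝ} {νl νr : Measure ℝ}

lemma exists_abs_sub_mul_densityCDF_le (hζ : IsHolderExpDensity ζ δ θ)
    (hl : HasLinearAsymptotics νl cl ρ) (hr : HasLinearAsymptotics νr cr ρ) (hα₀ : 0 ≤ α)
    (hαδ : α ≤ δ) (hαρ : α ≤ ρ) :
    ∃ E > 0, ∀ k ≥ 0, 0 < CkDH νl νr k → ∀ y,
      |CkDH νl νr k * (1 - GkDH νl νr k y) - Fs νl (y + k)| * densityCDF ζ (-hkfun k y)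
        ≤ E * ((1 + k) * (1 + max y 0)) * exp (-α * (k + max (-y) 0)) := by
  obtain ⟨E, hE₀, hE⟩ := hl.exists_abs_CkDH_mul_one_sub_GkDH_sub_le hr (hα₀.trans hαρ)
  obtain ⟨K, hK₀, hK⟩ := hζ.exists_densityCDF_neg_hkfun_le (hα₀.trans hαδ)
  refine ⟨E * K, by positivity, fun k hk hC y => ?_⟩
  rcases le_total y 0 with hy | hy
  · rw [CkDH_mul_one_sub_GkDH_of_nonpos hC hy, sub_self, abs_zero, zero_mul]
    positivity
  have hmin : 0 ≤ min y k := le_min hy hk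
  have hsum : max (k - y) 0 + min y k = k := by
    rcases le_total y k with h | h
    · rw [max_eq_left (sub_nonneg.2 h), min_eq_left h, sub_add_cancel]
    · rw [max_eq_right (sub_nonpos.2 h), min_eq_right h, zero_add]
  have hexp : exp (-ρ * max (k - y) 0) * exp (-δ * min y k) ≤ exp (-α * k) := by
    rw [← exp_add, exp_le_exp]
    nlinarith [le_max_right (k - y) 0]
  rw [max_eq_left hy, max_eq_right (neg_nonpos.2 hy), add_zero]
  calc |CkDH νl νr k * (1 - GkDH νl νr k y) - Fs νl (y + k)| * densityCDF ζ (-hkfun k y)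
      ≤ E * ((1 + k) * (1 + y)) * exp (-ρ * max (k - y) 0) * (K * exp (-δ * min y k)) :=
        mul_le_mul (hE k hk hC y hy) (hK k y) (densityCDF_nonneg hζ.nonneg _) (by positivity)
    _ = E * K * ((1 + k) * (1 + y)) * (exp (-ρ * max (k - y) 0) * exp (-δ * min y k)) := by
        ring
    _ ≤ E * K * ((1 + k) * (1 + y)) * exp (-α * k) := by gcongr

lemma exists_setIntegral_abs_kernelDiscrepancy_le_slope (hζ : IsHolderExpDensity ζ δ θ)
    (hl : HasLinearAsymptotics νl cl ρ) (hr : HasLinearAsymptotics νr cr ρ) (hδ : 0 < δ)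
    (hα₀ : 0 ≤ α) (hαδ : α ≤ δ / 2) (hαθ : α < θ / 2) (hαρ : α ≤ ρ) :
    ∃ E > 0, ∀ k ≥ 0, 0 < CkDH νl νr k → ∀ y,
      ∫ x in Iic 0, |kernelDiscrepancy ζ νl νr k x y|
        ≤ E * ((1 + k) * (1 + max y 0)) * (deriv (hkfun k) y * exp (-α * (k + max (-y) 0))
          + sigmoid (y - k) * exp (-δ * max y 0)) := by
  obtain ⟨D, hD₀, hD⟩ := exists_abs_sub_mul_densityCDF_le hζ hl hr hα₀ (by linarith) hαρ
  obtain ⟨F, hF₀, hF⟩ := hl.exists_Fs_add_le (hα₀.trans hαρ)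
  obtain ⟨K, hK₀, hK⟩ := hζ.exists_densityCDF_neg_hY_le hδ.le
  obtain ⟨H, hH₀, hH⟩ := hζ.exists_setIntegral_abs_sub_le hδ hα₀ hαδ hαθ
  refine ⟨D + F * K + F * H, by positivity, fun k hk hC y => ?_⟩
  have hslope : |deriv (hkfun k) y - sigmoid (y + k)| = sigmoid (y - k) := by
    rw [deriv_hkfun, sub_sub_cancel_left, abs_neg, abs_of_nonneg (sigmoid_nonneg _)]
  have hp := deriv_hkfun_nonneg hk y
  have hq := sigmoid_nonneg (y - k)
  have hf := Fs_nonneg νl (y + k)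
  have hb := densityCDF_nonneg hζ.nonneg (-(hY (y + k) - k))
  have : 0 ≤ ∫ x in Iic 0, |ζ (x - hkfun k y) - ζ (x - (hY (y + k) - k))| :=
    integral_nonneg fun _ => abs_nonneg _
  have hbound := setIntegral_Iic_abs_mul_sub_mul_le hζ.integrable hf hp hζ.nonneg
    (CkDH νl νr k * (1 - GkDH νl νr k y)) (sigmoid (y + k)) (hkfun k y) (hY (y + k) - k)
  rw [hslope, mul_right_comm _ (deriv _ _), mul_right_comm _ (deriv _ _)] at hbound
  have hD := hD k hk hC y
  have hF := hF k hk y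
  have hK := hK k y
  have hH := hH k hk y
  set W := (1 + k) * (1 + max y 0)
  have : 0 ≤ W := by positivity
  set p := deriv (hkfun k) y
  set e := exp (-α * (k + max (-y) 0))
  set e' := exp (-δ * max y 0)
  refine hbound.trans ?_
  calc _ ≤ D * W * e * p + F * W * sigmoid (y - k) * (K * e') + F * W * (H * e) * p := by
        gcongr
    _ ≤ D * W * e * p + F * W * sigmoid (y - k) * (K * e') + F * W * (H * e) * p
          + (F * K * W * p * e + (D + F * H) * W * sigmoid (y - k) * e') :=
        le_add_of_nonneg_right (by positivity)
    _ = (D + F * K + F * H) * W * (p * e + sigmoid (y - k) * e') := by ring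

lemma slope_error_le (hε : 0 < ε) (hε₁ : ε ≤ 1 / 2) (hεη : ε ≤ η) (hη : η ≤ 1)
    (hηδ : η + 2 * ε ≤ δ) (k y : ℝ) :
    (1 + max y 0) * (deriv (hkfun k) y * exp (-(η + 2 * ε) * (k + max (-y) 0))
      + sigmoid (y - k) * exp (-δ * max y 0)) ≤ 2 * ε⁻¹ * exp (-η * k) * exp (-ε * |y|) := by
  have hy : max y 0 - max (-y) 0 = y := max_zero_sub_max_neg_zero_eq_self y
  have habs : max y 0 + max (-y) 0 = |y| := max_zero_add_max_neg_zero_eq_abs_self y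
  have hpos : 0 ≤ max y 0 := le_max_right y 0
  have hneg : 0 ≤ max (-y) 0 := le_max_right (-y) 0
  have hslope : deriv (hkfun k) y * exp (-(η + 2 * ε) * (k + max (-y) 0))
      ≤ exp (-η * k - ε * |y| - ε * max y 0) := by
    calc _ ≤ exp (2 * ε * (k - y)) * exp (-(η + 2 * ε) * (k + max (-y) 0)) := by
          gcongr
          exact (deriv_hkfun_le_sigmoid k y).trans
            (sigmoid_le_exp_mul (by linarith) (by linarith) _)
      _ ≤ exp (-η * k - ε * |y| - ε * max y 0) := by
          rw [← exp_add, exp_le_exp, ← habs]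
          nlinarith
  have htail : sigmoid (y - k) * exp (-δ * max y 0)
      ≤ exp (-η * k - ε * |y| - ε * max y 0) := by
    calc _ ≤ exp (η * (y - k)) * exp (-δ * max y 0) := by
          gcongr
          exact sigmoid_le_exp_mul (hε.le.trans hεη) hη _
      _ ≤ exp (-η * k - ε * |y| - ε * max y 0) := by
          rw [← exp_add, exp_le_exp, ← habs]
          nlinarith
  have hlin : 1 + max y 0 ≤ ε⁻¹ * exp (ε * max y 0) := by
    rw [← div_eq_inv_mul, le_div_iff₀ hε]
    linarith [add_one_le_exp (ε * max y 0)]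
  calc _ ≤ (1 + max y 0) * (exp (-η * k - ε * |y| - ε * max y 0)
          + exp (-η * k - ε * |y| - ε * max y 0)) := by gcongr
    _ ≤ ε⁻¹ * exp (ε * max y 0) * (exp (-η * k - ε * |y| - ε * max y 0)
          + exp (-η * k - ε * |y| - ε * max y 0)) := by gcongr
    _ = 2 * ε⁻¹ * exp (-η * k) * exp (-ε * |y|) := by
        rw [sub_sub, sub_eq_add_neg, neg_add, exp_add, exp_add, exp_neg (ε * max y 0), neg_mul ε]
        field_simp
        ring

lemma exists_setIntegral_abs_kernelDiscrepancy_le (hζ : IsHolderExpDensity ζ δ θ)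
    (hl : HasLinearAsymptotics νl cl ρ) (hr : HasLinearAsymptotics νr cr ρ) (hδ : 0 < δ)
    (hε : 0 < ε) (hε₁ : ε ≤ 1 / 2) (hεη : ε ≤ η) (hη : η ≤ 1) (hδη : η + 2 * ε ≤ δ / 2)
    (hθη : η + 2 * ε < θ / 2) (hρη : η + 2 * ε ≤ ρ) :
    ∃ E > 0, ∀ k ≥ 0, 0 < CkDH νl νr k → ∀ y,
      ∫ x in Iic 0, |kernelDiscrepancy ζ νl νr k x y|
        ≤ E * (1 + k) * exp (-η * k) * exp (-ε * |y|) := by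
  obtain ⟨E, hE₀, hE⟩ := exists_setIntegral_abs_kernelDiscrepancy_le_slope hζ hl hr hδ
    (α := η + 2 * ε) (by linarith) hδη hθη hρη
  refine ⟨E * (2 * ε⁻¹), by positivity, fun k hk hC y => (hE k hk hC y).trans ?_⟩
  calc _ = E * (1 + k) * ((1 + max y 0) * (deriv (hkfun k) y
          * exp (-(η + 2 * ε) * (k + max (-y) 0)) + sigmoid (y - k) * exp (-δ * max y 0))) := by
        ring
    _ ≤ E * (1 + k) * (2 * ε⁻¹ * exp (-η * k) * exp (-ε * |y|)) :=
        mul_le_mul_of_nonneg_left (slope_error_le hε hε₁ hεη hη (by linarith) k y) (by positivity)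
    _ = E * (2 * ε⁻¹) * (1 + k) * exp (-η * k) * exp (-ε * |y|) := by ring

lemma integrable_exp_neg_mul_abs (hε : 0 < ε) : Integrable fun y : ℝ => exp (-ε * |y|) := by
  refine .of_integral_ne_zero ?_
  rw [integral_comp_abs (f := fun y => exp (-ε * y)), integral_exp_mul_Ioi (neg_lt_zero.2 hε)]
  simp [hε.ne']

lemma exists_lintegral_abs_kernelDiscrepancy_le (hζ : IsHolderExpDensity ζ δ θ)
    (hl : HasLinearAsymptotics νl cl ρ) (hr : HasLinearAsymptotics νr cr ρ) (hδ : 0 < δ)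
    (hε : 0 < ε) (hε₁ : ε ≤ 1 / 2) (hεη : ε ≤ η) (hη : η ≤ 1) (hδη : η + 2 * ε ≤ δ / 2)
    (hθη : η + 2 * ε < θ / 2) (hρη : η + 2 * ε ≤ ρ) :
    ∃ M > 0, ∀ k ≥ 0, 0 < CkDH νl νr k →
      ∫⁻ x in Iic 0, (∫⁻ y, ENNReal.ofReal |kernelDiscrepancy ζ νl νr k x y|)
        ≤ ENNReal.ofReal (M * (1 + k) * exp (-η * k)) := by
  obtain ⟨E, hE₀, hE⟩ :=
    exists_setIntegral_abs_kernelDiscrepancy_le hζ hl hr hδ hε hε₁ hεη hη hδη hθη hρη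
  have hexp := integrable_exp_neg_mul_abs hε
  have : 0 ≤ ∫ y : ℝ, exp (-ε * |y|) := integral_nonneg fun y => (exp_pos _).le
  refine ⟨E * (∫ y : ℝ, exp (-ε * |y|)) + 1, by positivity, fun k hk hC => ?_⟩
  have hc : Continuous ζ := hζ.continuous (by linarith)
  have hmeas : Measurable (Function.uncurry fun x y =>
      ENNReal.ofReal |kernelDiscrepancy ζ νl νr k x y|) :=
    (measurable_kernelDiscrepancy hc hl.measure_Iic_lt_top hr.measure_Iic_lt_top k).abs
      |>.ennreal_ofReal
  have hint (y : ℝ) : IntegrableOn (fun x => |kernelDiscrepancy ζ νl νr k x y|) (Iic 0) :=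
    (((hζ.integrable.comp_sub_right _).const_mul _).sub
      ((hζ.integrable.comp_sub_right _).const_mul _)).abs.integrableOn
  calc ∫⁻ x in Iic 0, (∫⁻ y, ENNReal.ofReal |kernelDiscrepancy ζ νl νr k x y|)
      = ∫⁻ y, (∫⁻ x in Iic 0, ENNReal.ofReal |kernelDiscrepancy ζ νl νr k x y|) :=
        lintegral_lintegral_swap hmeas.aemeasurable
    _ ≤ ∫⁻ y, ENNReal.ofReal (E * (1 + k) * exp (-η * k) * exp (-ε * |y|)) :=
        lintegral_mono fun y => by
          rw [← ofReal_integral_eq_lintegral_ofReal (hint y) (ae_of_all _ fun _ => abs_nonneg _)]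
          exact ENNReal.ofReal_le_ofReal (hE k hk hC y)
    _ = ENNReal.ofReal (E * (1 + k) * exp (-η * k) * ∫ y : ℝ, exp (-ε * |y|)) := by
        rw [← integral_const_mul, ofReal_integral_eq_lintegral_ofReal (hexp.const_mul _)
          (ae_of_all _ fun _ => by positivity)]
    _ ≤ ENNReal.ofReal ((E * (∫ y : ℝ, exp (-ε * |y|)) + 1) * (1 + k) * exp (-η * k)) := by
        refine ENNReal.ofReal_le_ofReal ?_
        have : 0 ≤ (1 + k) * exp (-η * k) := by positivity
        linarith

lemma lintegral_Iic_Tprob_GkDH_sub_le {k : ℝ} (hc : Continuous ζ) (hζ : IsHolderExpDensity ζ δ θ)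
    (hl : ∀ x, νl (Iic x) < ⊤) (hr : ∀ x, νr (Iic x) < ⊤) (hinv : IsInvariantY ζ νl)
    (hk : 0 ≤ k) (hC : 0 < CkDH νl νr k) :
    ∫⁻ x in Iic 0, ENNReal.ofReal |Tprob ζ k (GkDH νl νr k) x - GkDH νl νr k x|
      ≤ (∫⁻ x in Iic 0, ENNReal.ofReal (densityCDF ζ (x - k)))
        + ENNReal.ofReal (CkDH νl νr k)⁻¹
          * ∫⁻ x in Iic 0, (∫⁻ y, ENNReal.ofReal |kernelDiscrepancy ζ νl νr k x y|) := by
  have hmeas : Measurable fun x => densityCDF ζ (x - k) :=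
    ((continuous_densityCDF hc hζ.integrable).comp (continuous_sub_right k)).measurable
  rw [← lintegral_const_mul' _ _ ENNReal.ofReal_ne_top]
  refine le_of_le_of_eq ?_ (lintegral_add_left hmeas.ennreal_ofReal _)
  refine setLIntegral_mono' measurableSet_Iic fun x hx => ?_
  calc ENNReal.ofReal |Tprob ζ k (GkDH νl νr k) x - GkDH νl νr k x|
      ≤ ENNReal.ofReal (densityCDF ζ (x - k)
          + (CkDH νl νr k)⁻¹ * ∫ y, |kernelDiscrepancy ζ νl νr k x y|) :=
        ENNReal.ofReal_le_ofReal (abs_Tprob_GkDH_sub_le hc hζ.nonneg hζ.integrable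
          hζ.integral_eq_one hl hr hinv hk hC hx)
    _ = ENNReal.ofReal (densityCDF ζ (x - k)) + ENNReal.ofReal (CkDH νl νr k)⁻¹
          * ENNReal.ofReal (∫ y, |kernelDiscrepancy ζ νl νr k x y|) := by
        rw [ENNReal.ofReal_add (densityCDF_nonneg hζ.nonneg _)
          (mul_nonneg (inv_pos.2 hC).le (integral_nonneg fun _ => abs_nonneg _)),
          ENNReal.ofReal_mul (inv_pos.2 hC).le]
    _ ≤ _ := by
        gcongr
        refine (ofReal_le_enorm _).trans ((enorm_integral_le_lintegral_enorm _).trans_eq ?_)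
        simp only [enorm_eq_ofReal_abs, abs_abs]

lemma exists_eventually_lintegral_Iic_Tprob_GkDH_sub_le (hζ : IsHolderExpDensity ζ δ θ)
    (hl : HasLinearAsymptotics νl cl ρ) (hr : HasLinearAsymptotics νr cr ρ)
    (hinv : IsInvariantY ζ νl) (hθ₁ : θ ≤ 1) (hη : 0 < η)
    (hη' : η < min (δ / 2) (min (θ / 2) ρ)) :
    ∃ C > 0, ∀ᶠ k in atTop,
      ∫⁻ x in Iic 0, ENNReal.ofReal |Tprob ζ k (GkDH νl νr k) x - GkDH νl νr k x|
        ≤ ENNReal.ofReal (C * exp (-η * k)) := by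
  obtain ⟨β, hηβ, hβ⟩ := exists_between (lt_min hη' (show η < 3 * η by linarith))
  obtain ⟨⟨hβδ, hβθ, hβρ⟩, hβη⟩ : (β < δ / 2 ∧ β < θ / 2 ∧ β < ρ) ∧ β < 3 * η := by
    simpa only [lt_min_iff] using hβ
  obtain ⟨ε, rfl⟩ : ∃ ε, β = η + 2 * ε := ⟨(β - η) / 2, by ring⟩
  obtain ⟨K, hK₀, hK⟩ := hζ.exists_lintegral_densityCDF_sub_le (by linarith)
  obtain ⟨M, hM₀, hM⟩ := exists_lintegral_abs_kernelDiscrepancy_le hζ hl hr (by linarith)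
    (by linarith) (by linarith) (by linarith) (by linarith) hβδ.le hβθ hβρ.le
  have hc : Continuous ζ := hζ.continuous (by linarith)
  refine ⟨K + M, by positivity, ?_⟩
  filter_upwards [eventually_ge_atTop 0, hl.eventually_le_CkDH hr (by linarith)] with k hk hCk
  have hC : 0 < CkDH νl νr k := by linarith
  calc _ ≤ ENNReal.ofReal (K * exp (-δ * k))
        + ENNReal.ofReal (CkDH νl νr k)⁻¹ * ENNReal.ofReal (M * (1 + k) * exp (-η * k)) :=
        (lintegral_Iic_Tprob_GkDH_sub_le hc hζ hl.measure_Iic_lt_top hr.measure_Iic_lt_top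
          hinv hk hC).trans (by gcongr; exacts [hK k hk, hM k hk hC])
    _ = ENNReal.ofReal (K * exp (-δ * k)
          + (CkDH νl νr k)⁻¹ * (1 + k) * (M * exp (-η * k))) := by
        rw [← ENNReal.ofReal_mul (by positivity), ← ENNReal.ofReal_add (by positivity)
          (by positivity)]
        ring_nf
    _ ≤ ENNReal.ofReal (K * exp (-η * k) + 1 * (M * exp (-η * k))) := by
        gcongr
        · linarith
        · exact (inv_mul_le_one₀ hC).2 hCk
    _ = ENNReal.ofReal ((K + M) * exp (-η * k)) := by ring_nf

lemma lintegral_Ioi_Tprob_GkDH_sub_eq {k : ℝ} (hc : Continuous ζ) (hζ : IsHolderExpDensity ζ δ θ)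
    (hl : ∀ x, νl (Iic x) < ⊤) (hr : ∀ x, νr (Iic x) < ⊤) (hk : 0 ≤ k)
    (hC : 0 < CkDH νl νr k) :
    ∫⁻ x in Ioi 0, ENNReal.ofReal |Tprob ζ k (GkDH νl νr k) x - GkDH νl νr k x|
      = ∫⁻ x in Iic 0, ENNReal.ofReal
          |Tprob (fun x => ζ (-x)) k (GkDH νr νl k) x - GkDH νr νl k x| := by
  have hreflect (x : ℝ) : |Tprob (fun x => ζ (-x)) k (GkDH νr νl k) x - GkDH νr νl k x|
      = |Tprob ζ k (GkDH νl νr k) (-x) - GkDH νl νr k (-x)| := by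
    rw [funext (GkDH_reflect hC), Tprob_reflect hc hζ.nonneg hζ.integrable hζ.integral_eq_one hk
      (measurable_GkDH hl hr k) (abs_GkDH_le_one hl hr hC), sub_sub_sub_cancel_left, abs_sub_comm]
  simp_rw [hreflect]
  have hneg := (Measure.measurePreserving_neg (volume : Measure ℝ)).setLIntegral_comp_preimage_emb
    (Homeomorph.neg ℝ).measurableEmbedding
    (fun x => ENNReal.ofReal |Tprob ζ k (GkDH νl νr k) x - GkDH νl νr k x|) (Ici 0)
  simp only [neg_preimage, neg_Ici, neg_zero] at hneg
  rw [hneg, setLIntegral_congr Ioi_ae_eq_Ici]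

end ErrorBound

/-- Proposition: the one-step bound ‖T G_k - G_k‖₁ = O(e^{-η k}). -/
theorem stmt14
    (ζ : ℝ → ℝ) (hζmeas : Measurable ζ) (hζnn : ∀ x, 0 ≤ ζ x)
    (hζprob : ∫ x, ζ x = 1)
    (hmean : ∫ x, x * ζ x = 0)
    (δ : ℝ) (hδ : 0 < δ) (Cδ : ℝ)
    (htail : ∀ x : ℝ, 0 ≤ x → ∫ y in {y : ℝ | x < |y|}, ζ y ≤ Cδ * Real.exp (-δ * x))
    (θ : ℝ) (hθ0 : 0 < θ) (hθ1 : θ ≤ 1) (Cθ : ℝ)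
    (hHolder : ∀ x y : ℝ, |ζ x - ζ y| ≤ Cθ * |x - y| ^ θ)
    (νl νr : Measure ℝ)
    (hinvl : IsInvariantY ζ νl) (hinvr : IsInvariantY (fun x => ζ (-x)) νr)
    (hfinl : ∀ x : ℝ, νl (Set.Iic x) < ⊤) (hfinr : ∀ x : ℝ, νr (Set.Iic x) < ⊤)
    (cl cr ρ : ℝ) (hρ0 : 0 < ρ) (hρ1 : ρ < 1) (Ca : ℝ) (x₁ : ℝ)
    (hasyml : ∀ x ≥ x₁, |(νl (Set.Iic x)).toReal - (x + cl)| ≤ Ca * Real.exp (-ρ * x))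
    (hasymr : ∀ x ≥ x₁, |(νr (Set.Iic x)).toReal - (x + cr)| ≤ Ca * Real.exp (-ρ * x))
 :
    ∀ η : ℝ, 0 < η → η < min (δ / 2) (min (θ / 2) ρ) →
      ∃ C > 0, ∃ k₀ : ℝ, ∀ k ≥ k₀,
        ∫⁻ x, ENNReal.ofReal |Tprob ζ k (GkDH νl νr k) x - GkDH νl νr k x|
          ≤ ENNReal.ofReal (C * Real.exp (-η * k)) := by
  intro η hη hη'
  have hζ : IsHolderExpDensity ζ δ θ := ⟨hζnn, hζprob, ⟨Cδ, htail⟩, ⟨Cθ, hHolder⟩⟩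
  have hl : HasLinearAsymptotics νl cl ρ := ⟨hfinl, Ca, x₁, hasyml⟩
  have hr : HasLinearAsymptotics νr cr ρ := ⟨hfinr, Ca, x₁, hasymr⟩
  obtain ⟨C₁, hC₁, h₁⟩ :=
    exists_eventually_lintegral_Iic_Tprob_GkDH_sub_le hζ hl hr hinvl hθ1 hη hη'
  obtain ⟨C₂, hC₂, h₂⟩ :=
    exists_eventually_lintegral_Iic_Tprob_GkDH_sub_le hζ.comp_neg hr hl hinvr hθ1 hη hη'
  refine ⟨C₁ + C₂, add_pos hC₁ hC₂, eventually_atTop.1 ?_⟩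
  filter_upwards [h₁, h₂, eventually_ge_atTop 0, hl.eventually_le_CkDH hr hρ0.le]
    with k hk₁ hk₂ hk hCk
  rw [← lintegral_add_compl _ (measurableSet_Iic (a := 0)), compl_Iic,
    lintegral_Ioi_Tprob_GkDH_sub_eq (hζ.continuous hθ0) hζ hfinl hfinr hk (by linarith),
    add_mul, ENNReal.ofReal_add (by positivity) (by positivity)]
  exact add_le_add hk₁ hk₂
end

section
/- Let f : ℝ → ℝ satisfy |f(x) − f(y)| ≤ |x − y|^θ for all x ≠ y (for some θ > 0) and ∫_ℝ |f(x)| e^{c|x|} dx < ∞ for some c > 0. Then f(x) = O(e^{−b|x|}) as |x| → ∞, with b = cθ/(1 + θ). -/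
open MeasureTheory Real

/-!
If `|f|` is large at `x`, Hölder continuity keeps it large on a ball of radius `r` around `x`, and
on that ball the weight `exp (c * |y|)` is comparable to `exp (c * |x|)`. Markov's inequality then
gives `|f x| ≲ r ^ θ + r⁻¹ * exp (-c * |x|)`. The radius `r = exp (-c * |x| / (1 + θ))` balances the
two terms. Only a lower bound `κ * r ^ d` on the measure of small balls enters, so the argument
runs in metric measure spaces, with `d + θ` in place of `1 + θ`.
-/

open Metric Set

open scoped NNReal

lemma holderWith_of_pairwise_dist_le {X Y : Type*} [PseudoMetricSpace X] [PseudoMetricSpace Y]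
    {K θ : ℝ≥0} {f : X → Y}
    (h : Pairwise fun x y => dist (f x) (f y) ≤ K * dist x y ^ (θ : ℝ)) : HolderWith K θ f := by
  intro x y
  rcases eq_or_ne x y with rfl | hxy
  · simp
  · rw [edist_dist, edist_dist, ENNReal.ofReal_rpow_of_nonneg dist_nonneg θ.coe_nonneg,
      ← ENNReal.ofReal_coe_nnreal, ← ENNReal.ofReal_mul K.coe_nonneg]
    exact ENNReal.ofReal_le_ofReal (h hxy)

lemma mul_le_integral_of_forall_mem_le {α : Type*} [MeasurableSpace α] {μ : Measure α}
    {g : α → ℝ} (hg : Integrable g μ) (hg₀ : 0 ≤ᵐ[μ] g) {s : Set α} {a m : ℝ} (ha : 0 < a)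
    (hs : ∀ y ∈ s, a ≤ g y) (hm : ENNReal.ofReal m ≤ μ s) : a * m ≤ ∫ y, g y ∂μ := by
  have hm' : m ≤ μ.real {y | a ≤ g y} :=
    (ENNReal.ofReal_le_iff_le_toReal (hg.measure_ge_lt_top ha).ne).1 (hm.trans (measure_mono hs))
  calc a * m ≤ a * μ.real {y | a ≤ g y} := by gcongr
    _ ≤ ∫ y, g y ∂μ := mul_meas_ge_le_integral_of_nonneg hg₀ hg a

section HolderDecay

variable {X F : Type*} [PseudoMetricSpace X] [SeminormedAddCommGroup F]
  {f : X → F} {K θ : ℝ≥0} {c : ℝ} {o : X}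

lemma norm_sub_le_norm_of_holderWith (hf : HolderWith K θ f) {x y : X} {r : ℝ}
    (hy : y ∈ closedBall x r) : ‖f x‖ - K * r ^ (θ : ℝ) ≤ ‖f y‖ := by
  have hdist : ‖f x - f y‖ ≤ K * r ^ (θ : ℝ) :=
    dist_eq_norm (f x) (f y) ▸ hf.dist_le_of_le (mem_closedBall'.1 hy)
  linarith [norm_sub_norm_le (f x) (f y)]

variable [MeasurableSpace X] {μ : Measure X}

lemma norm_le_of_holderWith_of_integrable (hf : HolderWith K θ f) (hc : 0 ≤ c)
    (hint : Integrable (fun y => ‖f y‖ * exp (c * dist y o)) μ) {x : X} {r m : ℝ} (hm : 0 < m)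
    (hball : ENNReal.ofReal m ≤ μ (closedBall x r)) :
    ‖f x‖ ≤ K * r ^ (θ : ℝ) +
      exp (c * (r - dist x o)) / m * ∫ y, ‖f y‖ * exp (c * dist y o) ∂μ := by
  rcases le_or_gt ‖f x‖ (K * r ^ (θ : ℝ)) with hsmall | hlarge
  · exact hsmall.trans (le_add_of_nonneg_right (by positivity))
  have hlower : ∀ y ∈ closedBall x r, (‖f x‖ - K * r ^ (θ : ℝ)) * exp (c * (dist x o - r)) ≤
      ‖f y‖ * exp (c * dist y o) := by
    intro y hy
    have hdist : dist x o - r ≤ dist y o := by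
      linarith [dist_triangle x y o, mem_closedBall'.1 hy]
    gcongr
    exact norm_sub_le_norm_of_holderWith hf hy
  have hmarkov := mul_le_integral_of_forall_mem_le hint (ae_of_all μ fun y => by positivity)
    (mul_pos (sub_pos.2 hlarge) (exp_pos _)) hlower hball
  have hexp : exp (c * (r - dist x o)) * exp (c * (dist x o - r)) = 1 := by
    rw [← exp_add, exp_eq_one_iff]
    ring
  rw [← sub_le_iff_le_add']
  calc ‖f x‖ - K * r ^ (θ : ℝ)
      = exp (c * (r - dist x o)) / m *
          ((‖f x‖ - K * r ^ (θ : ℝ)) * exp (c * (dist x o - r)) * m) := by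
        field_simp
        exact hexp.symm
    _ ≤ exp (c * (r - dist x o)) / m * ∫ y, ‖f y‖ * exp (c * dist y o) ∂μ := by gcongr

theorem stmt18_general (hf : HolderWith K θ f) (hc : 0 ≤ c)
    (hint : Integrable (fun y => ‖f y‖ * exp (c * dist y o)) μ) {d κ : ℝ} (hdθ : 0 < d + θ)
    (hκ : 0 < κ)
    (hball : ∀ x, ∀ r ∈ Ioc (0 : ℝ) 1, ENNReal.ofReal (κ * r ^ d) ≤ μ (closedBall x r)) (x : X) :
    ‖f x‖ ≤ (K + exp c / κ * ∫ y, ‖f y‖ * exp (c * dist y o) ∂μ) *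
      exp (-(c * θ / (d + θ)) * dist x o) := by
  set I := ∫ y, ‖f y‖ * exp (c * dist y o) ∂μ
  set E := exp (-(c * θ / (d + θ)) * dist x o)
  set r := exp (-(c / (d + θ) * dist x o))
  have hr : 0 < r := exp_pos _
  have hr₁ : r ≤ 1 := exp_le_one_iff.2 (neg_nonpos.2 (by positivity))
  have hrθ : r ^ (θ : ℝ) = E := by
    rw [← exp_mul]
    congr 1
    ring
  have hrd : exp (-(c * dist x o)) / r ^ d = E := by
    rw [← exp_mul, ← exp_sub]
    congr 1
    field_simp
    ring
  calc ‖f x‖ ≤ K * r ^ (θ : ℝ) + exp (c * (r - dist x o)) / (κ * r ^ d) * I :=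
        norm_le_of_holderWith_of_integrable hf hc hint (by positivity) (hball x r ⟨hr, hr₁⟩)
    _ ≤ K * r ^ (θ : ℝ) + exp (c * (1 - dist x o)) / (κ * r ^ d) * I := by gcongr
    _ = K * r ^ (θ : ℝ) + exp c / κ * I * (exp (-(c * dist x o)) / r ^ d) := by
        rw [mul_sub, mul_one, sub_eq_add_neg, exp_add]
        ring
    _ = (K + exp c / κ * I) * E := by
        rw [hrθ, hrd]
        ring

end HolderDecay

/-- Hölder continuity plus exponential integrability imply pointwise exponential decay. -/
theorem stmt18 (f : ℝ → ℝ) (θ : ℝ) (hθ : 0 < θ)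
    (hHolder : ∀ x y : ℝ, x ≠ y → |f x - f y| ≤ |x - y| ^ θ)
    (c : ℝ) (hc : 0 < c)
    (hint : Integrable (fun x => |f x| * Real.exp (c * |x|))) :
    ∃ C > 0, ∃ R : ℝ, ∀ x : ℝ, R ≤ |x| →
      |f x| ≤ C * Real.exp (-(c * θ / (1 + θ)) * |x|) := by
  lift θ to ℝ≥0 using hθ.le
  have hf : HolderWith 1 θ f :=
    holderWith_of_pairwise_dist_le fun x y hxy => by simpa [dist_eq] using hHolder x y hxy
  refine ⟨1 + exp c / 2 * ∫ x, |f x| * exp (c * |x|), by positivity, 0, fun x _ => ?_⟩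
  simpa using stmt18_general (o := 0) hf hc.le (by simpa using hint) (d := 1) (by positivity)
    two_pos (fun x r _ => by simp) x
end
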